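/- arXiv:1905.07551 — 8 statements merged into one kernel-verified Lean document; each statement's English description precedes it below -/
import Mathlib

section
/- Let (]a_i,b_i[)_{i∈I} be a family of nonempty, pairwise disjoint open subintervals of [0,1] and (N_i)_{i∈I} a family of fuzzy negations. Then the ordinal sum N_I of the summands (a_i,b_i,N_i)_{i∈I} is a fuzzy negation, i.e., N_I(0)=1, N_I(1)=0, and N_I is decreasing. -/
/-!
An ordinal sum of fuzzy negations arises from the decreasing function `x ↦ 1 - x` by replacing it,
on each block `[a i, b i]`, by a decreasing function with the same values at `a i` and `b i`. Such
a replacement keeps the function decreasing: a point where old and new values agree bounds all new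
values to its right, and between `x` in a block and `y` beyond that block lies the right endpoint
of the block, which is such a point. That the values lie in `[0,1]` then follows from those at `0`
and `1`.
-/

open Set

/-- A fuzzy negation: a function `N : [0,1] → [0,1]` (here modeled on `ℝ`)
with `N 0 = 1`, `N 1 = 0` and `N` decreasing on `[0,1]`. -/
def FuzzyNegation (N : ℝ → ℝ) : Prop :=
  (∀ x ∈ Icc (0:ℝ) 1, N x ∈ Icc (0:ℝ) 1) ∧
  N 0 = 1 ∧ N 1 = 0 ∧
  (∀ x ∈ Icc (0:ℝ) 1, ∀ y ∈ Icc (0:ℝ) 1, x ≤ y → N y ≤ N x)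

/-- `(]a i, b i[)_{i ∈ I}` is a family of nonempty, pairwise disjoint open
subintervals of `[0,1]`. -/
def GoodFamily {I : Type*} (a b : I → ℝ) : Prop :=
  (∀ i, 0 ≤ a i ∧ a i < b i ∧ b i ≤ 1) ∧
  (∀ i j, i ≠ j → Disjoint (Ioo (a i) (b i)) (Ioo (a j) (b j)))

/-- `NI` is the ordinal sum of the summands `(a i, b i, N i)_{i ∈ I}`:
`NI x = (1 - b i) + (b i - a i) * N i ((x - a i)/(b i - a i))` whenever
`x ∈ [a i, b i]`, and `NI x = 1 - x` otherwise. -/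
def IsOrdinalSum {I : Type*} (a b : I → ℝ) (N : I → ℝ → ℝ) (NI : ℝ → ℝ) : Prop :=
  ∀ x ∈ Icc (0:ℝ) 1,
    (∀ i, x ∈ Icc (a i) (b i) →
      NI x = (1 - b i) + (b i - a i) * N i ((x - a i) / (b i - a i))) ∧
    ((∀ i, x ∉ Icc (a i) (b i)) → NI x = 1 - x)

theorem antitoneOn_of_antitoneOn_Icc {α β I : Type*} [LinearOrder α] [Preorder β] {s : Set α}
    {f g : α → β} {a b : I → α} (hg : AntitoneOn g s) (has : ∀ i, a i ∈ s) (hbs : ∀ i, b i ∈ s)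
    (hf : ∀ i, AntitoneOn f (Icc (a i) (b i))) (hfa : ∀ i, f (a i) = g (a i))
    (hfb : ∀ i, f (b i) = g (b i)) (hfg : ∀ x ∈ s, (∀ i, x ∉ Icc (a i) (b i)) → f x = g x) :
    AntitoneOn f s := by
  have le_of_agree : ∀ c ∈ s, f c = g c → ∀ y ∈ s, c ≤ y → f y ≤ f c := by
    intro c hc hfc y hy hcy
    by_cases hblock : ∃ j, y ∈ Icc (a j) (b j)
    · obtain ⟨j, hj⟩ := hblock
      rcases le_total (a j) c with hac | hca
      · exact hf j ⟨hac, hcy.trans hj.2⟩ hj hcy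
      · calc f y ≤ f (a j) := hf j (left_mem_Icc.2 (hj.1.trans hj.2)) hj hj.1
          _ = g (a j) := hfa j
          _ ≤ g c := hg hc (has j) hca
          _ = f c := hfc.symm
    · calc f y = g y := hfg y hy (not_exists.1 hblock)
        _ ≤ g c := hg hc hy hcy
        _ = f c := hfc.symm
  intro x hx y hy hxy
  by_cases hblock : ∃ i, x ∈ Icc (a i) (b i)
  · obtain ⟨i, hi⟩ := hblock
    rcases le_total y (b i) with hyb | hby
    · exact hf i hi ⟨hi.1.trans hxy, hyb⟩ hxy
    · calc f y ≤ f (b i) := le_of_agree (b i) (hbs i) (hfb i) y hy hby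
        _ ≤ f x := hf i hi (right_mem_Icc.2 (hi.1.trans hi.2)) hi.2
  · exact le_of_agree x hx (hfg x hx (not_exists.1 hblock)) y hy hxy

theorem fuzzyNegation_iff_antitoneOn {N : ℝ → ℝ} :
    FuzzyNegation N ↔ AntitoneOn N (Icc 0 1) ∧ N 0 = 1 ∧ N 1 = 0 := by
  constructor
  · rintro ⟨-, h0, h1, hanti⟩
    exact ⟨fun x hx y hy hxy => hanti x hx y hy hxy, h0, h1⟩
  · rintro ⟨hanti, h0, h1⟩
    refine ⟨fun x hx => ⟨?_, ?_⟩, h0, h1, fun x hx y hy hxy => hanti hx hy hxy⟩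
    · exact h1 ▸ hanti hx (right_mem_Icc.2 zero_le_one) hx.2
    · exact h0 ▸ hanti (left_mem_Icc.2 zero_le_one) hx hx.1

section RescaledNegation

/-- The copy of `N` on the block `[a, b]` that enters an ordinal sum: the graph of `N` on the unit
square, carried affinely onto the square `[a, b] × [1 - b, 1 - a]`, whose decreasing diagonal lies
on the graph of `x ↦ 1 - x`. -/
noncomputable def rescaledNegation (a b : ℝ) (N : ℝ → ℝ) (x : ℝ) : ℝ :=
  (1 - b) + (b - a) * N ((x - a) / (b - a))

variable {a b : ℝ} {N : ℝ → ℝ}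

theorem rescaledNegation_left (hN : N 0 = 1) : rescaledNegation a b N a = 1 - a := by
  rw [rescaledNegation, sub_self, zero_div, hN]
  ring

theorem rescaledNegation_right (hab : a ≠ b) (hN : N 1 = 0) :
    rescaledNegation a b N b = 1 - b := by
  rw [rescaledNegation, div_self (sub_ne_zero.2 hab.symm), hN, mul_zero, add_zero]

theorem antitoneOn_rescaledNegation (hN : AntitoneOn N (Icc 0 1)) :
    AntitoneOn (rescaledNegation a b N) (Icc a b) := by
  intro x hx y hy hxy
  have hba : 0 ≤ b - a := sub_nonneg.2 (hx.1.trans hx.2)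
  have rescale_mem : ∀ z ∈ Icc a b, (z - a) / (b - a) ∈ Icc (0 : ℝ) 1 := fun z hz =>
    ⟨div_nonneg (sub_nonneg.2 hz.1) hba, div_le_one_of_le₀ (sub_le_sub_right hz.2 a) hba⟩
  have hle : N ((y - a) / (b - a)) ≤ N ((x - a) / (b - a)) :=
    hN (rescale_mem x hx) (rescale_mem y hy) (by gcongr)
  unfold rescaledNegation
  gcongr

end RescaledNegation

namespace IsOrdinalSum

variable {I : Type*} {a b : I → ℝ} {N : I → ℝ → ℝ} {NI : ℝ → ℝ}

theorem eqOn_rescaledNegation (hNI : IsOrdinalSum a b N NI) {i : I} (ha : 0 ≤ a i)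
    (hb : b i ≤ 1) : EqOn NI (rescaledNegation (a i) (b i) (N i)) (Icc (a i) (b i)) :=
  fun x hx => (hNI x (Icc_subset_Icc ha hb hx)).1 i hx

theorem eq_one_sub_of_forall_notMem_Ioo (hNI : IsOrdinalSum a b N NI) (hab : ∀ i, a i ≠ b i)
    (hN₀ : ∀ i, N i 0 = 1) (hN₁ : ∀ i, N i 1 = 0) {x : ℝ} (hx : x ∈ Icc (0 : ℝ) 1)
    (hout : ∀ i, x ∉ Ioo (a i) (b i)) : NI x = 1 - x := by
  by_cases hblock : ∃ i, x ∈ Icc (a i) (b i)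
  · obtain ⟨i, hi⟩ := hblock
    have hNIx : NI x = rescaledNegation (a i) (b i) (N i) x := (hNI x hx).1 i hi
    rcases eq_endpoints_or_mem_Ioo_of_mem_Icc hi with rfl | rfl | hmem
    · rw [hNIx, rescaledNegation_left (hN₀ i)]
    · rw [hNIx, rescaledNegation_right (hab i) (hN₁ i)]
    · exact absurd hmem (hout i)
  · exact (hNI x hx).2 (not_exists.1 hblock)

theorem antitoneOn (hNI : IsOrdinalSum a b N NI) (hab : ∀ i, 0 ≤ a i ∧ a i < b i ∧ b i ≤ 1)
    (hN : ∀ i, AntitoneOn (N i) (Icc 0 1)) (hN₀ : ∀ i, N i 0 = 1) (hN₁ : ∀ i, N i 1 = 0) :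
    AntitoneOn NI (Icc 0 1) := by
  have heq (i : I) := hNI.eqOn_rescaledNegation (hab i).1 (hab i).2.2
  have hle (i : I) : a i ≤ b i := (hab i).2.1.le
  refine antitoneOn_of_antitoneOn_Icc (g := fun x => 1 - x) (a := a) (b := b)
    (fun x _ y _ hxy => sub_le_sub_left hxy 1) (fun i => ⟨(hab i).1, (hle i).trans (hab i).2.2⟩)
    (fun i => ⟨(hab i).1.trans (hle i), (hab i).2.2⟩) (fun i => ?_) (fun i => ?_) (fun i => ?_)
    (fun x hx => (hNI x hx).2)
  · exact (antitoneOn_rescaledNegation (hN i)).congr (heq i).symm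
  · rw [heq i (left_mem_Icc.2 (hle i)), rescaledNegation_left (hN₀ i)]
  · rw [heq i (right_mem_Icc.2 (hle i)), rescaledNegation_right (hab i).2.1.ne (hN₁ i)]

end IsOrdinalSum

/-- Blocks may overlap here: `IsOrdinalSum` then asks that their prescriptions for `NI` agree. -/
theorem ordinalSum_isFuzzyNegation_general {I : Type*} {a b : I → ℝ} {N : I → ℝ → ℝ}
    {NI : ℝ → ℝ} (hab : ∀ i, 0 ≤ a i ∧ a i < b i ∧ b i ≤ 1) (hneg : ∀ i, FuzzyNegation (N i))
    (hNI : IsOrdinalSum a b N NI) : FuzzyNegation NI := by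
  simp only [fuzzyNegation_iff_antitoneOn, forall_and] at hneg
  obtain ⟨hN, hN₀, hN₁⟩ := hneg
  have eq_one_sub {x : ℝ} := hNI.eq_one_sub_of_forall_notMem_Ioo (x := x)
    (fun i => (hab i).2.1.ne) hN₀ hN₁
  have hNI₀ : NI 0 = 1 - 0 :=
    eq_one_sub (left_mem_Icc.2 zero_le_one) fun i h => h.1.not_ge (hab i).1
  have hNI₁ : NI 1 = 1 - 1 :=
    eq_one_sub (right_mem_Icc.2 zero_le_one) fun i h => h.2.not_ge (hab i).2.2
  exact fuzzyNegation_iff_antitoneOn.2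
    ⟨hNI.antitoneOn hab hN hN₀ hN₁, hNI₀.trans (sub_zero 1), hNI₁.trans (sub_self 1)⟩

theorem ordinalSum_isFuzzyNegation {I : Type*} (a b : I → ℝ) (N : I → ℝ → ℝ) (NI : ℝ → ℝ)
    (hfam : GoodFamily a b) (hneg : ∀ i, FuzzyNegation (N i))
    (hNI : IsOrdinalSum a b N NI) :
    FuzzyNegation NI :=
  ordinalSum_isFuzzyNegation_general hfam.1 hneg hNI
end

section
/- Let (]a_i,b_i[)_{i∈I} be a family of nonempty, pairwise disjoint open subintervals of [0,1], (N_i)_{i∈I} a family of fuzzy negations, and N_I the ordinal sum of the summands (a_i,b_i,N_i)_{i∈I}. Then N_I(x) ≤ 1−x for all x ∈ [0,1] if and only if N_i(x) ≤ 1−x for all i ∈ I and all x ∈ [0,1]. -/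
/-!
The affine map `(t, s) ↦ (a i + (b i - a i) * t, 1 - b i + (b i - a i) * s)` carries the graph of
`N i` over `[0,1]` to that of `NI` over `[a i, b i]`. It preserves the line `s = 1 - t` and the
side of it on which a point lies. Off all these intervals `NI` is the standard negation.
-/

open Set

section AffineRescaling

variable {K : Type*} [Field K] [LinearOrder K] [IsStrictOrderedRing K] {a b : K}

theorem image_sub_div_sub_Icc (hab : a < b) :
    (fun x => (x - a) / (b - a)) '' Icc a b = Icc 0 1 := by
  have hpos : 0 < b - a := sub_pos.2 hab
  calc (fun x => (x - a) / (b - a)) '' Icc a b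
      = (· / (b - a)) '' ((· - a) '' Icc a b) := by rw [image_image]
    _ = (· / (b - a)) '' Icc 0 (b - a) := by rw [image_sub_const_Icc, sub_self]
    _ = Icc 0 1 := by
      simp only [div_eq_mul_inv, image_mul_right_Icc' _ _ (inv_pos.2 hpos), zero_mul,
        mul_inv_cancel₀ hpos.ne']

theorem one_sub_add_mul_le_one_sub_iff (hab : a < b) (x y : K) :
    1 - b + (b - a) * y ≤ 1 - x ↔ y ≤ 1 - (x - a) / (b - a) := by
  have hpos : 0 < b - a := sub_pos.2 hab
  have hcoord : 1 - (x - a) / (b - a) = (b - x) / (b - a) := by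
    rw [one_sub_div hpos.ne', sub_sub_sub_cancel_right]
  rw [hcoord, le_div_iff₀' hpos]
  constructor <;> intro h <;> linarith

theorem forall_mem_Icc_rescale_le_one_sub_iff (hab : a < b) (N : K → K) :
    (∀ x ∈ Icc a b, 1 - b + (b - a) * N ((x - a) / (b - a)) ≤ 1 - x) ↔
      ∀ t ∈ Icc (0 : K) 1, N t ≤ 1 - t := by
  simp only [one_sub_add_mul_le_one_sub_iff hab]
  rw [← image_sub_div_sub_Icc hab, forall_mem_image]

end AffineRescaling

theorem IsOrdinalSum.le_one_sub_iff_forall_mem_Icc {I : Type*} {a b : I → ℝ} {N : I → ℝ → ℝ}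
    {NI : ℝ → ℝ} (hNI : IsOrdinalSum a b N NI) (hsub : ∀ i, Icc (a i) (b i) ⊆ Icc 0 1) :
    (∀ x ∈ Icc (0 : ℝ) 1, NI x ≤ 1 - x) ↔ ∀ i, ∀ x ∈ Icc (a i) (b i), NI x ≤ 1 - x := by
  refine ⟨fun h i x hx => h x (hsub i hx), fun h x hx => ?_⟩
  by_cases hmem : ∃ i, x ∈ Icc (a i) (b i)
  · obtain ⟨i, hi⟩ := hmem
    exact h i x hi
  · exact ((hNI x hx).2 (not_exists.1 hmem)).le

theorem ordinalSum_le_standard_iff_general {I : Type*} {a b : I → ℝ} {N : I → ℝ → ℝ} {NI : ℝ → ℝ}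
    (hlt : ∀ i, a i < b i) (hsub : ∀ i, Icc (a i) (b i) ⊆ Icc 0 1)
    (hNI : IsOrdinalSum a b N NI) :
    (∀ x ∈ Icc (0 : ℝ) 1, NI x ≤ 1 - x) ↔ ∀ i, ∀ x ∈ Icc (0 : ℝ) 1, N i x ≤ 1 - x := by
  rw [hNI.le_one_sub_iff_forall_mem_Icc hsub]
  refine forall_congr' fun i => ?_
  rw [← forall_mem_Icc_rescale_le_one_sub_iff (hlt i)]
  exact forall₂_congr fun x hx => by rw [(hNI x (hsub i hx)).1 i hx]

theorem ordinalSum_le_standard_iff {I : Type*} (a b : I → ℝ) (N : I → ℝ → ℝ) (NI : ℝ → ℝ)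
    (hfam : GoodFamily a b) (hneg : ∀ i, FuzzyNegation (N i))
    (hNI : IsOrdinalSum a b N NI) :
    (∀ x ∈ Icc (0:ℝ) 1, NI x ≤ 1 - x) ↔ (∀ i, ∀ x ∈ Icc (0:ℝ) 1, N i x ≤ 1 - x) :=
  ordinalSum_le_standard_iff_general (fun i => (hfam.1 i).2.1)
    (fun i => Icc_subset_Icc (hfam.1 i).1 (hfam.1 i).2.2) hNI
end

section
/- Let (]a_i,b_i[)_{i∈I} be a family of nonempty, pairwise disjoint open subintervals of [0,1], (N_i)_{i∈I} a family of fuzzy negations, and N_I the ordinal sum of the summands (a_i,b_i,N_i)_{i∈I}. Then N_I(x) ≥ 1−x for all x ∈ [0,1] if and only if N_i(x) ≥ 1−x for all i ∈ I and all x ∈ [0,1]. -/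
open Set

/-!
The affine maps `t ↦ a i + t * (b i - a i)` and `y ↦ (1 - b i) + y * (b i - a i)` conjugate the
ordinal sum on `[a i, b i]` to `N i` on `[0,1]`. Both are strictly increasing, so comparing two
ordinal sums over the same intervals amounts to comparing their summands; off the intervals the two
sums agree. The standard negation is the case in which every summand is again standard.
-/

open AffineMap (lineMap)

theorem Icc_eq_image_lineMap {𝕜 : Type*} [Field 𝕜] [LinearOrder 𝕜] [IsStrictOrderedRing 𝕜]
    {x y : 𝕜} (hxy : x ≤ y) : Icc x y = lineMap x y '' Icc (0 : 𝕜) 1 := by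
  rw [← segment_eq_Icc hxy, segment_eq_image_lineMap]

theorem lineMap_mem_Icc {𝕜 : Type*} [Field 𝕜] [LinearOrder 𝕜] [IsStrictOrderedRing 𝕜]
    {x y t : 𝕜} (hxy : x ≤ y) (ht : t ∈ Icc (0 : 𝕜) 1) : lineMap x y t ∈ Icc x y :=
  Icc_eq_image_lineMap hxy ▸ mem_image_of_mem _ ht

namespace IsOrdinalSum

variable {I : Type*} {a b : I → ℝ} {M N : I → ℝ → ℝ} {MI NI : ℝ → ℝ}

theorem apply_lineMap (hNI : IsOrdinalSum a b N NI) {i : I}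
    (hi : 0 ≤ a i ∧ a i < b i ∧ b i ≤ 1) {t : ℝ} (ht : t ∈ Icc (0 : ℝ) 1) :
    NI (lineMap (a i) (b i) t) = lineMap (1 - b i) (1 - a i) (N i t) := by
  obtain ⟨ha, hab, hb⟩ := hi
  have hx : lineMap (a i) (b i) t ∈ Icc (a i) (b i) := lineMap_mem_Icc hab.le ht
  have hinv : (lineMap (a i) (b i) t - a i) / (b i - a i) = t := by
    rw [AffineMap.lineMap_apply_ring', add_sub_cancel_right,
      mul_div_cancel_right₀ t (sub_pos.2 hab).ne']
  rw [(hNI _ (Icc_subset_Icc ha hb hx)).1 i hx, hinv, AffineMap.lineMap_apply_ring']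
  ring

theorem one_sub (hab : ∀ i, a i ≠ b i) :
    IsOrdinalSum a b (fun _ x ↦ 1 - x) (fun x ↦ 1 - x) := by
  refine fun x _ ↦ ⟨fun i _ ↦ ?_, fun _ ↦ rfl⟩
  have hd : b i - a i ≠ 0 := sub_ne_zero.2 (hab i).symm
  field_simp
  ring

theorem forall_le_iff (hI : ∀ i, 0 ≤ a i ∧ a i < b i ∧ b i ≤ 1)
    (hMI : IsOrdinalSum a b M MI) (hNI : IsOrdinalSum a b N NI) :
    (∀ x ∈ Icc (0 : ℝ) 1, MI x ≤ NI x) ↔ ∀ i, ∀ t ∈ Icc (0 : ℝ) 1, M i t ≤ N i t := by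
  have le_iff_on_summand (i : I) {t : ℝ} (ht : t ∈ Icc (0 : ℝ) 1) :
      MI (lineMap (a i) (b i) t) ≤ NI (lineMap (a i) (b i) t) ↔ M i t ≤ N i t := by
    rw [hMI.apply_lineMap (hI i) ht, hNI.apply_lineMap (hI i) ht,
      lineMap_le_lineMap_iff_of_lt' (sub_lt_sub_left (hI i).2.1 1)]
  constructor
  · intro h i t ht
    have hx : lineMap (a i) (b i) t ∈ Icc (a i) (b i) :=
      lineMap_mem_Icc (hI i).2.1.le ht
    exact (le_iff_on_summand i ht).1 (h _ (Icc_subset_Icc (hI i).1 (hI i).2.2 hx))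
  · intro h x hx
    by_cases hmem : ∃ i, x ∈ Icc (a i) (b i)
    · obtain ⟨i, hi⟩ := hmem
      obtain ⟨t, ht, rfl⟩ := (Icc_eq_image_lineMap (hI i).2.1.le).le hi
      exact (le_iff_on_summand i ht).2 (h i t ht)
    · have hout : ∀ i, x ∉ Icc (a i) (b i) := not_exists.1 hmem
      rw [(hMI x hx).2 hout, (hNI x hx).2 hout]

end IsOrdinalSum

theorem ordinalSum_ge_standard_iff_general {I : Type*} {a b : I → ℝ} {N : I → ℝ → ℝ} {NI : ℝ → ℝ}
    (hI : ∀ i, 0 ≤ a i ∧ a i < b i ∧ b i ≤ 1) (hNI : IsOrdinalSum a b N NI) :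
    (∀ x ∈ Icc (0 : ℝ) 1, 1 - x ≤ NI x) ↔ ∀ i, ∀ x ∈ Icc (0 : ℝ) 1, 1 - x ≤ N i x :=
  (IsOrdinalSum.one_sub fun i ↦ (hI i).2.1.ne).forall_le_iff hI hNI

theorem ordinalSum_ge_standard_iff {I : Type*} (a b : I → ℝ) (N : I → ℝ → ℝ) (NI : ℝ → ℝ)
    (hfam : GoodFamily a b) (hneg : ∀ i, FuzzyNegation (N i))
    (hNI : IsOrdinalSum a b N NI) :
    (∀ x ∈ Icc (0:ℝ) 1, 1 - x ≤ NI x) ↔ (∀ i, ∀ x ∈ Icc (0:ℝ) 1, 1 - x ≤ N i x) :=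
  ordinalSum_ge_standard_iff_general hfam.1 hNI
end

section
/- Let (]a_i,b_i[)_{i∈I} be a family of nonempty, pairwise disjoint open subintervals of [0,1], (N_i)_{i∈I} a family of functions from [0,1] to [0,1], and N_I the function obtained by the ordinal-sum formula from these data. Then every N_i (i ∈ I) is a continuous fuzzy negation if and only if N_I is a continuous fuzzy negation such that N_I(a_i) = 1−a_i and N_I(b_i) = 1−b_i for each i ∈ I. -/
open Set

/-!
The affine change of variables carrying `[a i, b i]` to `[0, 1]` identifies the restriction of `NI`
to that block with `N i`. So, given that `NI x = 1 - x` off the blocks, the question is whether `NI`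
is continuous and decreasing on `[0, 1]` as soon as it is so on each block with endpoints on the
diagonal `1 - x`.

It is decreasing because a point where `NI` meets the diagonal separates the values to its left
from those to its right. By the intermediate value theorem `NI` maps every block onto the
reflection of that block, hence `[0, 1]` onto `[0, 1]`, and a monotone function whose image is an
interval is continuous. This avoids discussing accumulation points of the blocks.
-/

section Order

variable {I α β : Type*} [LinearOrder α]

theorem continuousOn_of_antitoneOn_of_ordConnected_image
    [TopologicalSpace α] [OrderTopology α]
    [LinearOrder β] [TopologicalSpace β] [OrderTopology β] [DenselyOrdered β]
    {f : α → β} {s : Set α} [s.OrdConnected] (hf : AntitoneOn f s)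
    (himage : (f '' s).OrdConnected) : ContinuousOn f s := by
  have hmono : Monotone (OrderDual.toDual ∘ imageFactorization f s) :=
    fun x y hxy => hf x.2 y.2 hxy
  have hcont : Continuous (imageFactorization f s) :=
    hmono.continuous_of_surjective
      (OrderDual.toDual.surjective.comp imageFactorization_surjective)
  exact continuousOn_iff_continuous_domRestrict.2 (continuous_subtype_val.comp hcont)

variable [Preorder β] {a b : I → α} {f g : α → β} {s : Set α}

theorem le_of_antitoneOn_blocks (hg : Antitone g)
    (hblock : ∀ i, AntitoneOn f (Icc (a i) (b i))) (hleft : ∀ i, f (a i) = g (a i))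
    (hoff : ∀ x ∈ s, (∀ i, x ∉ Icc (a i) (b i)) → f x = g x)
    {x y : α} (hxy : x ≤ y) (hx : f x = g x) (hy : y ∈ s) : f y ≤ f x := by
  by_cases hyblock : ∃ j, y ∈ Icc (a j) (b j)
  · obtain ⟨j, hj⟩ := hyblock
    rcases le_total (a j) x with hjx | hxj
    · exact hblock j ⟨hjx, hxy.trans hj.2⟩ hj hxy
    · calc
        f y ≤ f (a j) := hblock j (left_mem_Icc.2 (hj.1.trans hj.2)) hj hj.1
        _ = g (a j) := hleft j
        _ ≤ g x := hg hxj
        _ = f x := hx.symm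
  · rw [hoff y hy (not_exists.1 hyblock), hx]
    exact hg hxy

theorem antitoneOn_of_antitoneOn_blocks (hg : Antitone g)
    (hblock : ∀ i, AntitoneOn f (Icc (a i) (b i)))
    (hleft : ∀ i, f (a i) = g (a i)) (hright : ∀ i, f (b i) = g (b i))
    (hoff : ∀ x ∈ s, (∀ i, x ∉ Icc (a i) (b i)) → f x = g x) : AntitoneOn f s := by
  intro x hx y hy hxy
  by_cases hxblock : ∃ i, x ∈ Icc (a i) (b i)
  · obtain ⟨i, hi⟩ := hxblock
    rcases le_total y (b i) with hyi | hiy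
    · exact hblock i hi ⟨hi.1.trans hxy, hyi⟩ hxy
    · calc
        f y ≤ f (b i) := le_of_antitoneOn_blocks hg hblock hleft hoff hiy (hright i) hy
        _ ≤ f x := hblock i hi (right_mem_Icc.2 (hi.1.trans hi.2)) hi.2
  · exact le_of_antitoneOn_blocks hg hblock hleft hoff hxy
      (hoff x hx (not_exists.1 hxblock)) hy

end Order

/-- `f` is a continuous negation of `[p, q]`: it is continuous and decreasing there and meets the
diagonal `x ↦ 1 - x` at both endpoints, so that it maps `[p, q]` onto `[1 - q, 1 - p]`. This treats
`[0, 1]` and the blocks of an ordinal sum alike. -/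
structure ContinuousNegationOn (f : ℝ → ℝ) (p q : ℝ) : Prop where
  antitoneOn : AntitoneOn f (Icc p q)
  continuousOn : ContinuousOn f (Icc p q)
  left : f p = 1 - p
  right : f q = 1 - q

theorem fuzzyNegation_and_continuousOn_iff {N : ℝ → ℝ} :
    FuzzyNegation N ∧ ContinuousOn N (Icc 0 1) ↔ ContinuousNegationOn N 0 1 := by
  constructor
  · rintro ⟨⟨-, hzero, hone, hanti⟩, hcont⟩
    exact ⟨hanti, hcont, by rw [hzero, sub_zero], by rw [hone, sub_self]⟩
  · rintro ⟨hanti, hcont, hleft, hright⟩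
    rw [sub_zero] at hleft
    rw [sub_self] at hright
    refine ⟨⟨?_, hleft, hright, hanti⟩, hcont⟩
    simpa only [MapsTo, hleft, hright] using hanti.mapsTo_Icc

namespace ContinuousNegationOn

section Interval

variable {f g : ℝ → ℝ} {p q r s c d : ℝ}

theorem congr (hf : ContinuousNegationOn f p q) (hpq : p ≤ q) (hfg : EqOn f g (Icc p q)) :
    ContinuousNegationOn g p q where
  antitoneOn := hf.antitoneOn.congr hfg
  continuousOn := hf.continuousOn.congr hfg.symm
  left := hfg (left_mem_Icc.2 hpq) ▸ hf.left
  right := hfg (right_mem_Icc.2 hpq) ▸ hf.right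

theorem restrict (hf : ContinuousNegationOn f p q) (hpr : p ≤ r) (hsq : s ≤ q)
    (hr : f r = 1 - r) (hs : f s = 1 - s) : ContinuousNegationOn f r s where
  antitoneOn := hf.antitoneOn.mono (Icc_subset_Icc hpr hsq)
  continuousOn := hf.continuousOn.mono (Icc_subset_Icc hpr hsq)
  left := hr
  right := hs

theorem surjOn (hf : ContinuousNegationOn f p q) (hpq : p ≤ q) :
    SurjOn f (Icc p q) (Icc (1 - q) (1 - p)) := by
  simpa only [SurjOn, hf.left, hf.right] using intermediate_value_Icc' hpq hf.continuousOn

theorem comp_affine (hf : ContinuousNegationOn f r s) (hc : 0 < c)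
    (hp : c * p + d = r) (hq : c * q + d = s) :
    ContinuousNegationOn (fun t => (f (c * t + d) - (1 - c - d)) / c) p q := by
  subst hp hq
  have hmono : Monotone fun t => c * t + d := fun s t hst => by dsimp only; gcongr
  have hmaps : MapsTo (fun t => c * t + d) (Icc p q) (Icc (c * p + d) (c * q + d)) :=
    hmono.mapsTo_Icc
  refine ⟨fun s hs t ht hst => ?_, ?_, ?_, ?_⟩
  · have hle : f (c * t + d) ≤ f (c * s + d) := hf.antitoneOn (hmaps hs) (hmaps ht) (hmono hst)
    gcongr
  · have hcomp : ContinuousOn (fun t => f (c * t + d)) (Icc p q) :=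
      hf.continuousOn.comp (by fun_prop) hmaps
    exact (hcomp.sub continuousOn_const).div_const c
  · rw [hf.left]; field_simp; ring
  · rw [hf.right]; field_simp; ring

theorem rescale_iff (hpq : p < q)
    (hfg : ∀ x ∈ Icc p q, f x = (1 - q) + (q - p) * g ((x - p) / (q - p))) :
    ContinuousNegationOn f p q ↔ ContinuousNegationOn g 0 1 := by
  have hlen : 0 < q - p := sub_pos.2 hpq
  constructor
  · intro hf
    have hleft : (q - p) * 0 + p = p := by ring
    have hright : (q - p) * 1 + p = q := by ring
    refine (hf.comp_affine hlen hleft hright).congr zero_le_one fun t ht => ?_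
    have hmem : (q - p) * t + p ∈ Icc p q := ⟨by nlinarith [ht.1], by nlinarith [ht.2]⟩
    dsimp only
    rw [hfg _ hmem, add_sub_cancel_right, mul_div_cancel_left₀ _ hlen.ne']
    field_simp
    ring
  · intro hg
    have hleft : (q - p)⁻¹ * p + -p / (q - p) = 0 := by ring
    have hright : (q - p)⁻¹ * q + -p / (q - p) = 1 := by field_simp; ring
    refine (hg.comp_affine (inv_pos.2 hlen) hleft hright).congr hpq.le fun x hx => ?_
    have harg : (q - p)⁻¹ * x + -p / (q - p) = (x - p) / (q - p) := by ring
    dsimp only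
    rw [hfg x hx, harg]
    field_simp
    ring

end Interval

section Blocks

variable {I : Type*} {a b : I → ℝ} {f : ℝ → ℝ} {p q : ℝ}

theorem surjOn_of_blocks (ha : ∀ i, p ≤ a i) (hb : ∀ i, b i ≤ q)
    (hblock : ∀ i, ContinuousNegationOn f (a i) (b i))
    (hoff : ∀ x ∈ Icc p q, (∀ i, x ∉ Icc (a i) (b i)) → f x = 1 - x) :
    SurjOn f (Icc p q) (Icc (1 - q) (1 - p)) := by
  intro v hv
  have hreflect : 1 - v ∈ Icc p q := ⟨le_sub_comm.1 hv.2, sub_le_comm.1 hv.1⟩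
  by_cases hvblock : ∃ i, 1 - v ∈ Icc (a i) (b i)
  · obtain ⟨i, hi⟩ := hvblock
    exact image_mono (Icc_subset_Icc (ha i) (hb i)) <|
      (hblock i).surjOn (hi.1.trans hi.2) ⟨sub_le_comm.1 hi.2, le_sub_comm.1 hi.1⟩
  · exact ⟨1 - v, hreflect, by rw [hoff _ hreflect (not_exists.1 hvblock), sub_sub_cancel]⟩

theorem of_blocks (hpq : p ≤ q) (ha : ∀ i, p ≤ a i) (hb : ∀ i, b i ≤ q)
    (hblock : ∀ i, ContinuousNegationOn f (a i) (b i))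
    (hoff : ∀ x ∈ Icc p q, (∀ i, x ∉ Icc (a i) (b i)) → f x = 1 - x) :
    ContinuousNegationOn f p q := by
  have hanti : AntitoneOn f (Icc p q) :=
    antitoneOn_of_antitoneOn_blocks (g := (1 - ·)) (fun _ _ h => sub_le_sub_left h 1)
      (fun i => (hblock i).antitoneOn) (fun i => (hblock i).left) (fun i => (hblock i).right) hoff
  have hp : f p = 1 - p := by
    by_cases hpblock : ∃ i, p ∈ Icc (a i) (b i)
    · obtain ⟨i, hi⟩ := hpblock
      exact hi.1.antisymm (ha i) ▸ (hblock i).left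
    · exact hoff p (left_mem_Icc.2 hpq) (not_exists.1 hpblock)
  have hq : f q = 1 - q := by
    by_cases hqblock : ∃ i, q ∈ Icc (a i) (b i)
    · obtain ⟨i, hi⟩ := hqblock
      exact (hb i).antisymm hi.2 ▸ (hblock i).right
    · exact hoff q (right_mem_Icc.2 hpq) (not_exists.1 hqblock)
  have himage : f '' Icc p q = Icc (1 - q) (1 - p) :=
    (surjOn_of_blocks ha hb hblock hoff).image_eq_of_mapsTo (hp ▸ hq ▸ hanti.mapsTo_Icc)
  exact ⟨hanti,
    continuousOn_of_antitoneOn_of_ordConnected_image hanti (himage ▸ ordConnected_Icc), hp, hq⟩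

end Blocks

end ContinuousNegationOn

theorem ordinalSum_continuous_fuzzyNegation_iff_general {I : Type*} (a b : I → ℝ)
    (N : I → ℝ → ℝ) (NI : ℝ → ℝ)
    (hab : ∀ i, 0 ≤ a i ∧ a i < b i ∧ b i ≤ 1)
    (hNI : IsOrdinalSum a b N NI) :
    (∀ i, FuzzyNegation (N i) ∧ ContinuousOn (N i) (Icc (0:ℝ) 1)) ↔
      ((FuzzyNegation NI ∧ ContinuousOn NI (Icc (0:ℝ) 1)) ∧
        ∀ i, NI (a i) = 1 - a i ∧ NI (b i) = 1 - b i) := by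
  simp only [fuzzyNegation_and_continuousOn_iff]
  have ha (i : I) : 0 ≤ a i := (hab i).1
  have hb (i : I) : b i ≤ 1 := (hab i).2.2
  have hrescale (i : I) :
      ContinuousNegationOn NI (a i) (b i) ↔ ContinuousNegationOn (N i) 0 1 :=
    ContinuousNegationOn.rescale_iff (hab i).2.1 fun x hx =>
      (hNI x (Icc_subset_Icc (ha i) (hb i) hx)).1 i hx
  constructor
  · intro hN
    have hblock (i : I) : ContinuousNegationOn NI (a i) (b i) := (hrescale i).2 (hN i)
    exact ⟨.of_blocks zero_le_one ha hb hblock fun x hx => (hNI x hx).2,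
      fun i => ⟨(hblock i).left, (hblock i).right⟩⟩
  · rintro ⟨hneg, hend⟩ i
    exact (hrescale i).1 (hneg.restrict (ha i) (hb i) (hend i).1 (hend i).2)

theorem ordinalSum_continuous_fuzzyNegation_iff {I : Type*} (a b : I → ℝ)
    (N : I → ℝ → ℝ) (NI : ℝ → ℝ)
    (hfam : GoodFamily a b)
    (hmaps : ∀ i, ∀ x ∈ Icc (0:ℝ) 1, N i x ∈ Icc (0:ℝ) 1)
    (hNI : IsOrdinalSum a b N NI) :
    (∀ i, FuzzyNegation (N i) ∧ ContinuousOn (N i) (Icc (0:ℝ) 1)) ↔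
      ((FuzzyNegation NI ∧ ContinuousOn NI (Icc (0:ℝ) 1)) ∧
        ∀ i, NI (a i) = 1 - a i ∧ NI (b i) = 1 - b i) := by
  exact ordinalSum_continuous_fuzzyNegation_iff_general a b N NI hfam.1 hNI
end

section
/- Let (]a_i,b_i[)_{i∈I} be a family of nonempty, pairwise disjoint open subintervals of [0,1], (N_i)_{i∈I} a family of fuzzy negations, and N_I the ordinal sum of the summands (a_i,b_i,N_i)_{i∈I}. If N_I satisfies the two properties: (1) for every i ∈ I and x ∈ [0,1], N_I(x) = 1−a_i only when x = a_i, and (2) for every i ∈ I and x ∈ [0,1], N_I(x) = 1−b_i only when x = b_i, then N_i is a frontier fuzzy negation for each i ∈ I. -/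
/-!
On `[a, b]` an ordinal sum `F` is an affine copy of its summand `N`: the affine maps sending `0, 1`
to `a, b` and to `1 - b, 1 - a` carry the graph of `N` to that of `F`. Hence `N x = 1` exactly when
`F` takes the value `1 - a` at the point corresponding to `x`; as that value is taken only
at `a`, this forces `x = 0`; likewise for `N x = 0`, the value `1 - b` and `x = 1`.
-/

open Set

section Summand

variable {𝕜 : Type*} [Field 𝕜] [LinearOrder 𝕜] [IsStrictOrderedRing 𝕜]
  {a b x : 𝕜} {N F : 𝕜 → 𝕜}

theorem lineMap_mem_Icc_s10 (hab : a ≤ b) (hx : x ∈ Icc 0 1) : AffineMap.lineMap a b x ∈ Icc a b :=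
  (convex_Icc a b).lineMap_mem (left_mem_Icc.2 hab) (right_mem_Icc.2 hab) hx

/-- `N` is the summand of `F` on `[a, b]`: the condition that an ordinal sum `F` imposes on a single
summand, isolated from the rest of the family. It does not require `[a, b] ⊆ [0, 1]`. -/
def IsOrdinalSummand (a b : 𝕜) (N F : 𝕜 → 𝕜) : Prop :=
  ∀ y ∈ Icc a b, F y = (1 - b) + (b - a) * N ((y - a) / (b - a))

namespace IsOrdinalSummand

theorem apply_lineMap (hF : IsOrdinalSummand a b N F) (hab : a < b) (hx : x ∈ Icc 0 1) :
    F (AffineMap.lineMap a b x) = AffineMap.lineMap (1 - b) (1 - a) (N x) := by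
  have rescale_lineMap : (AffineMap.lineMap a b x - a) / (b - a) = x := by
    rw [AffineMap.lineMap_apply_ring', add_sub_cancel_right,
      mul_div_cancel_right₀ x (sub_ne_zero.2 hab.ne')]
  rw [hF _ (lineMap_mem_Icc_s10 hab.le hx), rescale_lineMap, AffineMap.lineMap_apply_ring']
  ring

theorem apply_lineMap_eq_one_sub_left_iff (hF : IsOrdinalSummand a b N F) (hab : a < b)
    (hx : x ∈ Icc 0 1) : F (AffineMap.lineMap a b x) = 1 - a ↔ N x = 1 := by
  simp [hF.apply_lineMap hab hx, hab.ne']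

theorem apply_lineMap_eq_one_sub_right_iff (hF : IsOrdinalSummand a b N F) (hab : a < b)
    (hx : x ∈ Icc 0 1) : F (AffineMap.lineMap a b x) = 1 - b ↔ N x = 0 := by
  simp [hF.apply_lineMap hab hx, hab.ne']

theorem eq_one_iff_eq_zero (hF : IsOrdinalSummand a b N F) (hab : a < b) (h0 : N 0 = 1)
    (ha : ∀ y ∈ Icc a b, F y = 1 - a → y = a) (hx : x ∈ Icc 0 1) : N x = 1 ↔ x = 0 := by
  refine ⟨fun h => ?_, fun h => h ▸ h0⟩
  have hy : AffineMap.lineMap a b x = a :=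
    ha _ (lineMap_mem_Icc_s10 hab.le hx) ((hF.apply_lineMap_eq_one_sub_left_iff hab hx).2 h)
  exact (AffineMap.lineMap_eq_left_iff.1 hy).resolve_left hab.ne

theorem eq_zero_iff_eq_one (hF : IsOrdinalSummand a b N F) (hab : a < b) (h1 : N 1 = 0)
    (hb : ∀ y ∈ Icc a b, F y = 1 - b → y = b) (hx : x ∈ Icc 0 1) : N x = 0 ↔ x = 1 := by
  refine ⟨fun h => ?_, fun h => h ▸ h1⟩
  have hy : AffineMap.lineMap a b x = b :=
    hb _ (lineMap_mem_Icc_s10 hab.le hx) ((hF.apply_lineMap_eq_one_sub_right_iff hab hx).2 h)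
  exact (AffineMap.lineMap_eq_right_iff.1 hy).resolve_left hab.ne

end IsOrdinalSummand

theorem ordinalSum_summands_frontier_general (hab : a < b) (hF : IsOrdinalSummand a b N F)
    (h0 : N 0 = 1) (h1 : N 1 = 0) (ha : ∀ y ∈ Icc a b, F y = 1 - a → y = a)
    (hb : ∀ y ∈ Icc a b, F y = 1 - b → y = b) :
    (∀ x ∈ Icc 0 1, (N x = 1 ↔ x = 0)) ∧ (∀ x ∈ Icc 0 1, (N x = 0 ↔ x = 1)) :=
  ⟨fun _ hx => hF.eq_one_iff_eq_zero hab h0 ha hx, fun _ hx => hF.eq_zero_iff_eq_one hab h1 hb hx⟩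

end Summand

section Family

variable {I : Type*} {a b : I → ℝ} {N : I → ℝ → ℝ} {NI : ℝ → ℝ} {i : I}

theorem GoodFamily.Icc_subset (hfam : GoodFamily a b) (i : I) : Icc (a i) (b i) ⊆ Icc 0 1 :=
  Icc_subset_Icc (hfam.1 i).1 (hfam.1 i).2.2

theorem IsOrdinalSum.isOrdinalSummand (hNI : IsOrdinalSum a b N NI)
    (hsub : Icc (a i) (b i) ⊆ Icc 0 1) : IsOrdinalSummand (a i) (b i) (N i) NI :=
  fun y hy => (hNI y (hsub hy)).1 i hy

end Family

theorem ordinalSum_summands_frontier {I : Type*} (a b : I → ℝ) (N : I → ℝ → ℝ) (NI : ℝ → ℝ)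
    (hfam : GoodFamily a b) (hneg : ∀ i, FuzzyNegation (N i))
    (hNI : IsOrdinalSum a b N NI)
    (h1 : ∀ i, ∀ x ∈ Icc (0:ℝ) 1, NI x = 1 - a i → x = a i)
    (h2 : ∀ i, ∀ x ∈ Icc (0:ℝ) 1, NI x = 1 - b i → x = b i) :
    ∀ i, (∀ x ∈ Icc (0:ℝ) 1, (N i x = 1 ↔ x = 0)) ∧
         (∀ x ∈ Icc (0:ℝ) 1, (N i x = 0 ↔ x = 1)) := by
  intro i
  obtain ⟨-, hN0, hN1, -⟩ := hneg i
  have hsub := hfam.Icc_subset i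
  exact ordinalSum_summands_frontier_general (hfam.1 i).2.1 (hNI.isOrdinalSummand hsub) hN0 hN1
    (fun y hy => h1 i y (hsub hy)) (fun y hy => h2 i y (hsub hy))
end

section
/- Let (]a_i,b_i[)_{i∈I} be a family of nonempty, pairwise disjoint open subintervals of [0,1], (N_i)_{i∈I} a family of fuzzy negations, and N_I the ordinal sum of the summands (a_i,b_i,N_i)_{i∈I}. If N_I is a strong fuzzy negation, then every N_i (i ∈ I) is a strict fuzzy negation (continuous and strictly decreasing). -/
/-!
An antitone involution of an interval is an order isomorphism onto the order dual, so a strong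
negation is automatically continuous and strictly decreasing.  On `[a i, b i]` the ordinal sum is
`N i` conjugated by increasing affine maps, and both properties pass through the conjugation.
-/

open Set

theorem continuousOn_of_antitoneOn_of_leftInvOn {α : Type*} [LinearOrder α] [TopologicalSpace α]
    [OrderTopology α] {f : α → α} {s : Set α} [s.OrdConnected] (hanti : AntitoneOn f s)
    (hmaps : MapsTo f s s) (hinv : LeftInvOn f f s) : ContinuousOn f s := by
  let e : s ≃ s :=
    Function.Involutive.toPerm (hmaps.restrict f s s) fun x ↦ Subtype.ext (hinv x.2)
  have he : Antitone e := fun x y hxy ↦ hanti x.2 y.2 hxy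
  let g : s ≃o sᵒᵈ := (e.trans OrderDual.toDual).toOrderIso he fun _ _ hxy ↦ he hxy
  rw [continuousOn_iff_continuous_domRestrict]
  exact continuous_subtype_val.comp (continuous_ofDual.comp g.continuous)

theorem mapsTo_add_sub_mul_Icc {a b : ℝ} (hab : a ≤ b) :
    MapsTo (fun u ↦ a + (b - a) * u) (Icc 0 1) (Icc a b) := by
  rintro u ⟨hu0, hu1⟩
  have hd : 0 ≤ b - a := sub_nonneg.2 hab
  have hlower : 0 ≤ (b - a) * u := mul_nonneg hd hu0
  have hupper : (b - a) * u ≤ b - a := mul_le_of_le_one_right hd hu1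
  constructor <;> linarith

namespace FuzzyNegation

variable {N : ℝ → ℝ}

theorem mapsTo (hN : FuzzyNegation N) : MapsTo N (Icc 0 1) (Icc 0 1) :=
  hN.1

theorem antitoneOn (hN : FuzzyNegation N) : AntitoneOn N (Icc 0 1) :=
  fun x hx y hy hxy ↦ hN.2.2.2 x hx y hy hxy

theorem continuousOn_of_leftInvOn (hN : FuzzyNegation N) (hinv : LeftInvOn N N (Icc 0 1)) :
    ContinuousOn N (Icc 0 1) :=
  continuousOn_of_antitoneOn_of_leftInvOn hN.antitoneOn hN.mapsTo hinv

theorem strictAntiOn_of_leftInvOn (hN : FuzzyNegation N) (hinv : LeftInvOn N N (Icc 0 1)) :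
    StrictAntiOn N (Icc 0 1) :=
  hN.antitoneOn.strictAntiOn_of_injOn hinv.injOn

end FuzzyNegation

namespace IsOrdinalSum

variable {I : Type*} {a b : I → ℝ} {N : I → ℝ → ℝ} {NI : ℝ → ℝ} {i : I}

theorem summand_eqOn (hNI : IsOrdinalSum a b N NI) (ha : 0 ≤ a i) (hab : a i < b i)
    (hb : b i ≤ 1) :
    EqOn (N i) (fun u ↦ (NI (a i + (b i - a i) * u) - (1 - b i)) / (b i - a i)) (Icc 0 1) := by
  intro u hu
  have hd : b i - a i ≠ 0 := (sub_pos.2 hab).ne'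
  have hx : a i + (b i - a i) * u ∈ Icc (a i) (b i) := mapsTo_add_sub_mul_Icc hab.le hu
  have hsum := (hNI _ (Icc_subset_Icc ha hb hx)).1 i hx
  rw [add_sub_cancel_left, mul_div_cancel_left₀ _ hd] at hsum
  rw [eq_div_iff hd, hsum]
  ring

theorem continuousOn_summand (hNI : IsOrdinalSum a b N NI) (ha : 0 ≤ a i) (hab : a i < b i)
    (hb : b i ≤ 1) (hcont : ContinuousOn NI (Icc (a i) (b i))) :
    ContinuousOn (N i) (Icc 0 1) := by
  have hcomp : ContinuousOn (fun u ↦ NI (a i + (b i - a i) * u)) (Icc 0 1) :=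
    hcont.comp (by fun_prop) (mapsTo_add_sub_mul_Icc hab.le)
  exact ((hcomp.sub continuousOn_const).div_const _).congr (hNI.summand_eqOn ha hab hb)

theorem strictAntiOn_summand (hNI : IsOrdinalSum a b N NI) (ha : 0 ≤ a i) (hab : a i < b i)
    (hb : b i ≤ 1) (hanti : StrictAntiOn NI (Icc (a i) (b i))) :
    StrictAntiOn (N i) (Icc 0 1) := by
  intro u hu v hv huv
  have hd : 0 < b i - a i := sub_pos.2 hab
  have hscaled : a i + (b i - a i) * u < a i + (b i - a i) * v :=
    add_lt_add_right (mul_lt_mul_of_pos_left huv hd) _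
  have hNI_lt : NI (a i + (b i - a i) * v) < NI (a i + (b i - a i) * u) :=
    hanti (mapsTo_add_sub_mul_Icc hab.le hu) (mapsTo_add_sub_mul_Icc hab.le hv) hscaled
  rw [hNI.summand_eqOn ha hab hb hu, hNI.summand_eqOn ha hab hb hv]
  exact div_lt_div_of_pos_right (sub_lt_sub_right hNI_lt _) hd

end IsOrdinalSum

theorem ordinalSum_strong_implies_strict_general {I : Type*} {a b : I → ℝ} {N : I → ℝ → ℝ}
    {NI : ℝ → ℝ} (hab : ∀ i, 0 ≤ a i ∧ a i < b i ∧ b i ≤ 1) (hNI : IsOrdinalSum a b N NI)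
    (hneg : FuzzyNegation NI) (hinv : LeftInvOn NI NI (Icc 0 1)) (i : I) :
    ContinuousOn (N i) (Icc 0 1) ∧ StrictAntiOn (N i) (Icc 0 1) := by
  obtain ⟨ha, hlt, hb⟩ := hab i
  have hsub : Icc (a i) (b i) ⊆ Icc 0 1 := Icc_subset_Icc ha hb
  exact ⟨hNI.continuousOn_summand ha hlt hb ((hneg.continuousOn_of_leftInvOn hinv).mono hsub),
    hNI.strictAntiOn_summand ha hlt hb ((hneg.strictAntiOn_of_leftInvOn hinv).mono hsub)⟩

theorem ordinalSum_strong_implies_strict {I : Type*} (a b : I → ℝ)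
    (N : I → ℝ → ℝ) (NI : ℝ → ℝ)
    (hfam : GoodFamily a b) (hneg : ∀ i, FuzzyNegation (N i))
    (hNI : IsOrdinalSum a b N NI)
    (hstrong : FuzzyNegation NI ∧ ∀ x ∈ Icc (0:ℝ) 1, NI (NI x) = x) :
    ∀ i, ContinuousOn (N i) (Icc (0:ℝ) 1) ∧ StrictAntiOn (N i) (Icc (0:ℝ) 1) :=
  ordinalSum_strong_implies_strict_general hfam.1 hNI hstrong.1 hstrong.2
end

section
/- Let (]a_i,b_i[)_{i∈I} be a family of nonempty, pairwise disjoint open subintervals of [0,1] and (N_i)_{i∈I} a family of invertible fuzzy negations with inverses (N_i^{-1})_{i∈I}. Let N_I be the ordinal sum of the summands (a_i,b_i,N_i)_{i∈I} and let N_I^{-1} be the ordinal sum of the summands (1−b_i, 1−a_i, N_i^{-1})_{i∈I}. Then N_I^{-1} is the inverse of N_I, i.e., N_I(N_I^{-1}(x)) = x and N_I^{-1}(N_I(x)) = x for all x ∈ [0,1]. -/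
/-!
An ordinal sum carries each `[a i, b i]` to the reflected interval `[1 - b i, 1 - a i]` through a
rescaled copy of its summand, and is `x ↦ 1 - x` elsewhere. The ordinal sum of the inverse summands
over the reflected intervals undoes it piece by piece, and since reflecting twice returns the
original intervals, the two ordinal sums play symmetric roles. Shared endpoints are harmless: for
the image of a point under the `i`-th formula, the `i`-th formula of the inverse is valid.
-/

open Set

section ReflectedRescale

variable {𝕜 : Type*} [Field 𝕜]

/-- The rescaled copy of `f : [0,1] → [0,1]` that maps `[a, b]` to the reflected interval
`[1 - b, 1 - a]`: a single summand of an ordinal sum of fuzzy negations. -/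
def reflectedRescale (a b : 𝕜) (f : 𝕜 → 𝕜) (x : 𝕜) : 𝕜 :=
  (1 - b) + (b - a) * f ((x - a) / (b - a))

variable [LinearOrder 𝕜] [IsStrictOrderedRing 𝕜] {a b : 𝕜} {f g : 𝕜 → 𝕜}

lemma mapsTo_sub_div_sub_Icc (a b : 𝕜) :
    MapsTo (fun x => (x - a) / (b - a)) (Icc a b) (Icc 0 1) := fun x hx =>
  have hxa : 0 ≤ x - a := sub_nonneg.2 hx.1
  have hxb : x - a ≤ b - a := sub_le_sub_right hx.2 a
  ⟨div_nonneg hxa (hxa.trans hxb), div_le_one_of_le₀ hxb (hxa.trans hxb)⟩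

lemma mapsTo_reflectedRescale (hf : MapsTo f (Icc 0 1) (Icc 0 1)) :
    MapsTo (reflectedRescale a b f) (Icc a b) (Icc (1 - b) (1 - a)) := by
  intro x hx
  have hlen : 0 ≤ b - a := sub_nonneg.2 (hx.1.trans hx.2)
  obtain ⟨hf_nonneg, hf_le_one⟩ := hf (mapsTo_sub_div_sub_Icc a b hx)
  constructor
  · exact le_add_of_nonneg_right (mul_nonneg hlen hf_nonneg)
  · calc
      reflectedRescale a b f x ≤ (1 - b) + (b - a) := by
        unfold reflectedRescale
        gcongr
        exact mul_le_of_le_one_right hlen hf_le_one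
      _ = 1 - a := by ring

lemma leftInvOn_reflectedRescale (hab : a < b) (hgf : LeftInvOn g f (Icc 0 1)) :
    LeftInvOn (reflectedRescale (1 - b) (1 - a) g) (reflectedRescale a b f) (Icc a b) := by
  intro x hx
  have hlen : b - a ≠ 0 := sub_ne_zero.2 hab.ne'
  have hcoord : (reflectedRescale a b f x - (1 - b)) / (b - a) = f ((x - a) / (b - a)) := by
    rw [reflectedRescale, add_sub_cancel_left, mul_div_cancel_left₀ _ hlen]
  calc
    reflectedRescale (1 - b) (1 - a) g (reflectedRescale a b f x)
      = a + (b - a) * g ((reflectedRescale a b f x - (1 - b)) / (b - a)) := by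
        simp only [reflectedRescale, sub_sub_cancel, sub_sub_sub_cancel_left]
    _ = a + (b - a) * ((x - a) / (b - a)) := by
        rw [hcoord, hgf (mapsTo_sub_div_sub_Icc a b hx)]
    _ = x := by rw [mul_div_cancel₀ _ hlen, add_sub_cancel]

end ReflectedRescale

namespace IsOrdinalSum

variable {I : Type*} {a b : I → ℝ} {f g : I → ℝ → ℝ} {F G : ℝ → ℝ} {x : ℝ}

lemma eq_reflectedRescale (hF : IsOrdinalSum a b f F) (hx : x ∈ Icc (0 : ℝ) 1) {i : I}
    (hi : x ∈ Icc (a i) (b i)) : F x = reflectedRescale (a i) (b i) (f i) x :=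
  (hF x hx).1 i hi

lemma eq_one_sub (hF : IsOrdinalSum a b f F) (hx : x ∈ Icc (0 : ℝ) 1)
    (hout : ∀ i, x ∉ Icc (a i) (b i)) : F x = 1 - x :=
  (hF x hx).2 hout

lemma leftInvOn (hab : ∀ i, 0 ≤ a i ∧ a i < b i ∧ b i ≤ 1)
    (hf : ∀ i, MapsTo (f i) (Icc 0 1) (Icc 0 1))
    (hgf : ∀ i, LeftInvOn (g i) (f i) (Icc 0 1))
    (hF : IsOrdinalSum a b f F)
    (hG : IsOrdinalSum (fun i => 1 - b i) (fun i => 1 - a i) g G) :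
    LeftInvOn G F (Icc 0 1) := by
  intro x hx
  by_cases hin : ∃ i, x ∈ Icc (a i) (b i)
  · obtain ⟨i, hi⟩ := hin
    obtain ⟨ha, hlt, hb⟩ := hab i
    have hy := mapsTo_reflectedRescale (hf i) hi
    have hy01 : reflectedRescale (a i) (b i) (f i) x ∈ Icc (0 : ℝ) 1 :=
      Icc_subset_Icc (sub_nonneg.2 hb) (sub_le_self 1 ha) hy
    rw [hF.eq_reflectedRescale hx hi, hG.eq_reflectedRescale hy01 hy]
    exact leftInvOn_reflectedRescale hlt (hgf i) hi
  · have hout : ∀ i, x ∉ Icc (a i) (b i) := not_exists.1 hin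
    have hout' : ∀ i, 1 - x ∉ Icc (1 - b i) (1 - a i) := by
      simpa only [sub_mem_Icc_iff_right, sub_sub_cancel] using hout
    rw [hF.eq_one_sub hx hout, hG.eq_one_sub (Icc.mem_iff_one_sub_mem.1 hx) hout', sub_sub_cancel]

end IsOrdinalSum

theorem ordinalSum_inverse_general {I : Type*} {a b : I → ℝ}
    {N Ninv : I → ℝ → ℝ} {NI NIinv : ℝ → ℝ}
    (hab : ∀ i, 0 ≤ a i ∧ a i < b i ∧ b i ≤ 1)
    (hN : ∀ i, MapsTo (N i) (Icc 0 1) (Icc 0 1))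
    (hNinv : ∀ i, MapsTo (Ninv i) (Icc 0 1) (Icc 0 1))
    (hinv : ∀ i, InvOn (Ninv i) (N i) (Icc 0 1) (Icc 0 1))
    (hNI : IsOrdinalSum a b N NI)
    (hNIinv : IsOrdinalSum (fun i => 1 - b i) (fun i => 1 - a i) Ninv NIinv) :
    InvOn NIinv NI (Icc 0 1) (Icc 0 1) := by
  have hab_reflected (i : I) : 0 ≤ 1 - b i ∧ 1 - b i < 1 - a i ∧ 1 - a i ≤ 1 :=
    ⟨sub_nonneg.2 (hab i).2.2, sub_lt_sub_left (hab i).2.1 1, sub_le_self 1 (hab i).1⟩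
  have hNI_reflected : IsOrdinalSum (fun i => 1 - (1 - a i)) (fun i => 1 - (1 - b i)) N NI := by
    simpa only [sub_sub_cancel] using hNI
  exact ⟨IsOrdinalSum.leftInvOn hab hN (fun i => (hinv i).1) hNI hNIinv,
    IsOrdinalSum.leftInvOn hab_reflected hNinv (fun i => (hinv i).2) hNIinv hNI_reflected⟩

theorem ordinalSum_inverse {I : Type*} (a b : I → ℝ)
    (N Ninv : I → ℝ → ℝ) (NI NIinv : ℝ → ℝ)
    (hfam : GoodFamily a b) (hneg : ∀ i, FuzzyNegation (N i))
    (hinvmaps : ∀ i, ∀ x ∈ Icc (0:ℝ) 1, Ninv i x ∈ Icc (0:ℝ) 1)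
    (hinv : ∀ i, ∀ x ∈ Icc (0:ℝ) 1, Ninv i (N i x) = x ∧ N i (Ninv i x) = x)
    (hNI : IsOrdinalSum a b N NI)
    (hNIinv : IsOrdinalSum (fun i => 1 - b i) (fun i => 1 - a i) Ninv NIinv) :
    ∀ x ∈ Icc (0:ℝ) 1, NI (NIinv x) = x ∧ NIinv (NI x) = x := by
  have hInvOn : InvOn NIinv NI (Icc 0 1) (Icc 0 1) :=
    ordinalSum_inverse_general hfam.1 (fun i => (hneg i).1) hinvmaps
      (fun i => ⟨fun y hy => (hinv i y hy).1, fun y hy => (hinv i y hy).2⟩) hNI hNIinv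
  exact fun x hx => ⟨hInvOn.2 hx, hInvOn.1 hx⟩
end

section
/- Let (S_i)_{i∈I} be a family of t-conorms, (]a_i,b_i[)_{i∈I} a family of nonempty, pairwise disjoint open subintervals of [0,1], and S_I the ordinal sum of the summands (a_i,b_i,S_i)_{i∈I}. Then the natural negation N_{S_I} of S_I satisfies: N_{S_I}(1) = 0; N_{S_I}(x) = (1−a_i)·N_{S_i}((x−a_i)/(1−a_i)) + a_i whenever x ∈ [a_i,b_i[ for some i ∈ I with b_i = 1; and N_{S_I}(x) = 1 for every other x (i.e., when x ∈ [a_i,b_i] for some i with b_i < 1, or when x ∉ ⋃_{i∈I}[a_i,b_i] and x ≠ 1). -/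
/-!
A summand on `[a i, b i]` takes values at most `b i`, and elsewhere `S_I` is `max`. So
`S_I x y = 1` with `x, y < 1` forces `x` and `y` into a common `[a i, b i]` with `b i = 1`, and by
disjointness there is at most one such `i`. For `x ∈ [a i, 1[`, the set `{y | S_I x y = 1}` is then
the image of the corresponding set for `S i` under the increasing affine map `[0, 1] → [a i, 1]`,
and this map commutes with the infimum. For every other `x < 1` the set is `{1}`; the delicate point
is `x = b j = a i`, where `S_I x y = y` on `[a i, 1]` because `0` is neutral for `S i`.
-/

open Set

/-- A t-conorm on `[0,1]` (modeled on `ℝ`). -/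
def IsTconorm (S : ℝ → ℝ → ℝ) : Prop :=
  (∀ x ∈ Set.Icc (0:ℝ) 1, ∀ y ∈ Set.Icc (0:ℝ) 1, S x y ∈ Set.Icc (0:ℝ) 1) ∧
  (∀ x ∈ Set.Icc (0:ℝ) 1, ∀ y ∈ Set.Icc (0:ℝ) 1, S x y = S y x) ∧
  (∀ x ∈ Set.Icc (0:ℝ) 1, ∀ y ∈ Set.Icc (0:ℝ) 1, ∀ z ∈ Set.Icc (0:ℝ) 1,
    S x (S y z) = S (S x y) z) ∧
  (∀ x ∈ Set.Icc (0:ℝ) 1, ∀ y ∈ Set.Icc (0:ℝ) 1, ∀ z ∈ Set.Icc (0:ℝ) 1,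
    x ≤ y → S x z ≤ S y z) ∧
  (∀ x ∈ Set.Icc (0:ℝ) 1, S x 0 = x)

/-- `SI` is the ordinal sum of the summands `(a i, b i, S i)_{i ∈ I}`. -/
def IsTconormOrdinalSum {I : Type*} (a b : I → ℝ) (S : I → ℝ → ℝ → ℝ)
    (SI : ℝ → ℝ → ℝ) : Prop :=
  ∀ x ∈ Set.Icc (0:ℝ) 1, ∀ y ∈ Set.Icc (0:ℝ) 1,
    (∀ i, x ∈ Set.Icc (a i) (b i) → y ∈ Set.Icc (a i) (b i) →
      SI x y = a i + (b i - a i) *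
        S i ((x - a i) / (b i - a i)) ((y - a i) / (b i - a i))) ∧
    ((∀ i, ¬(x ∈ Set.Icc (a i) (b i) ∧ y ∈ Set.Icc (a i) (b i))) →
      SI x y = max x y)

/-- The natural negation of a t-conorm `S`: `N_S x = inf {y ∈ [0,1] : S x y = 1}`. -/
noncomputable def natNegS (S : ℝ → ℝ → ℝ) (x : ℝ) : ℝ :=
  sInf {y | y ∈ Set.Icc (0:ℝ) 1 ∧ S x y = 1}

/-- A disjunction on `[0,1]` (modeled on `ℝ`): values are at most `1`, `0` is left neutral and `1`
is absorbing on both sides. The natural negation of an ordinal sum of t-conorms can be computed from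
these laws alone. -/
structure IsDisjunction (S : ℝ → ℝ → ℝ) : Prop where
  le_one : ∀ x ∈ Icc (0 : ℝ) 1, ∀ y ∈ Icc (0 : ℝ) 1, S x y ≤ 1
  zero_left : ∀ y ∈ Icc (0 : ℝ) 1, S 0 y = y
  one_left : ∀ y ∈ Icc (0 : ℝ) 1, S 1 y = 1
  one_right : ∀ x ∈ Icc (0 : ℝ) 1, S x 1 = 1

theorem IsTconorm.isDisjunction {S : ℝ → ℝ → ℝ} (hS : IsTconorm S) : IsDisjunction S := by
  obtain ⟨mapsTo, comm, -, mono_left, zero_right⟩ := hS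
  have zero_mem : (0 : ℝ) ∈ Icc (0 : ℝ) 1 := left_mem_Icc.2 zero_le_one
  have one_mem : (1 : ℝ) ∈ Icc (0 : ℝ) 1 := right_mem_Icc.2 zero_le_one
  have zero_left : ∀ y ∈ Icc (0 : ℝ) 1, S 0 y = y := fun y hy =>
    (comm 0 zero_mem y hy).trans (zero_right y hy)
  have one_right : ∀ x ∈ Icc (0 : ℝ) 1, S x 1 = 1 := fun x hx =>
    le_antisymm (mapsTo x hx 1 one_mem).2 <|
      (zero_left 1 one_mem).ge.trans (mono_left 0 zero_mem x hx 1 one_mem hx.1)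
  exact
    { le_one := fun x hx y hy => (mapsTo x hx y hy).2
      zero_left := zero_left
      one_left := fun y hy => (comm 1 one_mem y hy).trans (one_right y hy)
      one_right := one_right }

/-- The set of those `y ∈ [0,1]` with `S x y = 1`, whose infimum is the natural negation of `S`
at `x`. -/
def oneFiber (S : ℝ → ℝ → ℝ) (x : ℝ) : Set ℝ :=
  {y | y ∈ Icc (0 : ℝ) 1 ∧ S x y = 1}

theorem natNegS_eq_sInf_oneFiber (S : ℝ → ℝ → ℝ) (x : ℝ) : natNegS S x = sInf (oneFiber S x) :=
  rfl

theorem bddBelow_oneFiber (S : ℝ → ℝ → ℝ) (x : ℝ) : BddBelow (oneFiber S x) :=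
  ⟨0, fun _ hy => hy.1.1⟩

theorem natNegS_eq_zero {S : ℝ → ℝ → ℝ} {x : ℝ} (h : S x 0 = 1) : natNegS S x = 0 :=
  IsLeast.csInf_eq ⟨⟨left_mem_Icc.2 zero_le_one, h⟩, fun _ hy => hy.1.1⟩

theorem one_mem_oneFiber {S : ℝ → ℝ → ℝ} {x : ℝ} (h : S x 1 = 1) : 1 ∈ oneFiber S x :=
  ⟨right_mem_Icc.2 zero_le_one, h⟩

theorem sInf_image_mul_add {s : Set ℝ} (hne : s.Nonempty) (hbdd : BddBelow s) {c : ℝ} (hc : 0 ≤ c)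
    (d : ℝ) : sInf ((fun z => c * z + d) '' s) = c * sInf s + d :=
  have hmono : Monotone fun z => c * z + d := (monotone_mul_left_of_nonneg hc).add_const d
  (hmono.map_csInf_of_continuousAt (by fun_prop) hne hbdd).symm

theorem sub_div_sub_mem_Icc {K : Type*} [Field K] [LinearOrder K] [IsStrictOrderedRing K]
    {a b x : K} (hx : x ∈ Icc a b) : (x - a) / (b - a) ∈ Icc (0 : K) 1 :=
  have hden : 0 ≤ b - a := sub_nonneg.2 (hx.1.trans hx.2)
  ⟨div_nonneg (sub_nonneg.2 hx.1) hden, div_le_one_of_le₀ (sub_le_sub_right hx.2 a) hden⟩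

section OrdinalSum

variable {I : Type*} {a b : I → ℝ} {S : I → ℝ → ℝ → ℝ} {SI : ℝ → ℝ → ℝ}

namespace GoodFamily

theorem lower_nonneg (hfam : GoodFamily a b) (i : I) : 0 ≤ a i :=
  (hfam.1 i).1

theorem lower_lt_upper (hfam : GoodFamily a b) (i : I) : a i < b i :=
  (hfam.1 i).2.1

theorem upper_le_one (hfam : GoodFamily a b) (i : I) : b i ≤ 1 :=
  (hfam.1 i).2.2

theorem Icc_subset_s17 (hfam : GoodFamily a b) (i : I) : Icc (a i) (b i) ⊆ Icc 0 1 :=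
  Icc_subset_Icc (hfam.lower_nonneg i) (hfam.upper_le_one i)

theorem upper_le_lower (hfam : GoodFamily a b) {i j : I} (hij : i ≠ j) (hb : b i ≤ b j) :
    b i ≤ a j := by
  have hmin : min (b i) (b j) ≤ max (a i) (a j) := Ioo_disjoint_Ioo.1 (hfam.2 i j hij)
  rw [min_eq_left hb] at hmin
  exact (le_max_iff.1 hmin).resolve_left (hfam.lower_lt_upper i).not_ge

theorem upper_injective (hfam : GoodFamily a b) : Function.Injective b := by
  intro i j hb
  by_contra hij
  exact ((hfam.lower_lt_upper j).trans_eq hb.symm).not_ge (hfam.upper_le_lower hij hb.le)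

end GoodFamily

namespace IsTconormOrdinalSum

theorem eq_on_summand (hSI : IsTconormOrdinalSum a b S SI) (hfam : GoodFamily a b) {i : I}
    {x y : ℝ} (hx : x ∈ Icc (a i) (b i)) (hy : y ∈ Icc (a i) (b i)) :
    SI x y = a i + (b i - a i) * S i ((x - a i) / (b i - a i)) ((y - a i) / (b i - a i)) :=
  (hSI x (hfam.Icc_subset_s17 i hx) y (hfam.Icc_subset_s17 i hy)).1 i hx hy

theorem eq_max_or_mem_summand (hSI : IsTconormOrdinalSum a b S SI) {x y : ℝ}
    (hx : x ∈ Icc (0 : ℝ) 1) (hy : y ∈ Icc (0 : ℝ) 1) :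
    SI x y = max x y ∨ ∃ i, x ∈ Icc (a i) (b i) ∧ y ∈ Icc (a i) (b i) :=
  or_iff_not_imp_right.2 fun h => (hSI x hx y hy).2 (not_exists.1 h)

theorem eq_upper_iff (hSI : IsTconormOrdinalSum a b S SI) (hfam : GoodFamily a b) {i : I} {x y : ℝ}
    (hx : x ∈ Icc (a i) (b i)) (hy : y ∈ Icc (a i) (b i)) :
    SI x y = b i ↔ S i ((x - a i) / (b i - a i)) ((y - a i) / (b i - a i)) = 1 := by
  rw [hSI.eq_on_summand hfam hx hy, ← eq_sub_iff_add_eq',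
    mul_eq_left₀ (sub_pos.2 (hfam.lower_lt_upper i)).ne']

theorem le_upper (hSI : IsTconormOrdinalSum a b S SI) (hfam : GoodFamily a b) {i : I}
    (hS : IsDisjunction (S i)) {x y : ℝ} (hx : x ∈ Icc (a i) (b i)) (hy : y ∈ Icc (a i) (b i)) :
    SI x y ≤ b i := by
  rw [hSI.eq_on_summand hfam hx hy, ← le_sub_iff_add_le']
  exact mul_le_of_le_one_right (sub_pos.2 (hfam.lower_lt_upper i)).le
    (hS.le_one _ (sub_div_sub_mem_Icc hx) _ (sub_div_sub_mem_Icc hy))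

theorem lower_left (hSI : IsTconormOrdinalSum a b S SI) (hfam : GoodFamily a b) {i : I}
    (hS : IsDisjunction (S i)) {y : ℝ} (hy : y ∈ Icc (a i) (b i)) : SI (a i) y = y := by
  rw [hSI.eq_on_summand hfam (left_mem_Icc.2 (hfam.lower_lt_upper i).le) hy, sub_self, zero_div,
    hS.zero_left _ (sub_div_sub_mem_Icc hy),
    mul_div_cancel₀ _ (sub_pos.2 (hfam.lower_lt_upper i)).ne', add_sub_cancel]

theorem upper_left (hSI : IsTconormOrdinalSum a b S SI) (hfam : GoodFamily a b) {i : I}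
    (hS : IsDisjunction (S i)) {y : ℝ} (hy : y ∈ Icc (a i) (b i)) : SI (b i) y = b i := by
  rw [hSI.eq_upper_iff hfam (right_mem_Icc.2 (hfam.lower_lt_upper i).le) hy,
    div_self (sub_pos.2 (hfam.lower_lt_upper i)).ne']
  exact hS.one_left _ (sub_div_sub_mem_Icc hy)

theorem upper_right (hSI : IsTconormOrdinalSum a b S SI) (hfam : GoodFamily a b) {i : I}
    (hS : IsDisjunction (S i)) {x : ℝ} (hx : x ∈ Icc (a i) (b i)) : SI x (b i) = b i := by
  rw [hSI.eq_upper_iff hfam hx (right_mem_Icc.2 (hfam.lower_lt_upper i).le),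
    div_self (sub_pos.2 (hfam.lower_lt_upper i)).ne']
  exact hS.one_right _ (sub_div_sub_mem_Icc hx)

theorem one_left (hSI : IsTconormOrdinalSum a b S SI) (hfam : GoodFamily a b)
    (hS : ∀ i, IsDisjunction (S i)) {y : ℝ} (hy : y ∈ Icc (0 : ℝ) 1) : SI 1 y = 1 := by
  rcases hSI.eq_max_or_mem_summand (right_mem_Icc.2 zero_le_one) hy with hmax | ⟨i, h1i, hyi⟩
  · rw [hmax, max_eq_left hy.2]
  · have hb : b i = 1 := le_antisymm (hfam.upper_le_one i) h1i.2
    simpa only [hb] using hSI.upper_left hfam (hS i) hyi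

theorem one_right (hSI : IsTconormOrdinalSum a b S SI) (hfam : GoodFamily a b)
    (hS : ∀ i, IsDisjunction (S i)) {x : ℝ} (hx : x ∈ Icc (0 : ℝ) 1) : SI x 1 = 1 := by
  rcases hSI.eq_max_or_mem_summand hx (right_mem_Icc.2 zero_le_one) with hmax | ⟨i, hxi, h1i⟩
  · rw [hmax, max_eq_right hx.2]
  · have hb : b i = 1 := le_antisymm (hfam.upper_le_one i) h1i.2
    simpa only [hb] using hSI.upper_right hfam (hS i) hxi

theorem mem_top_summand_of_eq_one (hSI : IsTconormOrdinalSum a b S SI) (hfam : GoodFamily a b)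
    (hS : ∀ i, IsDisjunction (S i)) {x y : ℝ} (hx : x ∈ Icc (0 : ℝ) 1) (hx1 : x ≠ 1)
    (hy : y ∈ Icc (0 : ℝ) 1) (hy1 : y ≠ 1) (h : SI x y = 1) :
    ∃ i, b i = 1 ∧ x ∈ Icc (a i) (b i) ∧ y ∈ Icc (a i) (b i) := by
  rcases hSI.eq_max_or_mem_summand hx hy with hmax | ⟨i, hxi, hyi⟩
  · exact absurd (hmax.symm.trans h) (max_lt (hx.2.lt_of_ne hx1) (hy.2.lt_of_ne hy1)).ne
  · have one_le : 1 ≤ b i := h.ge.trans (hSI.le_upper hfam (hS i) hxi hyi)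
    exact ⟨i, le_antisymm (hfam.upper_le_one i) one_le, hxi, hyi⟩

theorem oneFiber_subset_of_mem_top (hSI : IsTconormOrdinalSum a b S SI) (hfam : GoodFamily a b)
    (hS : ∀ i, IsDisjunction (S i)) {i : I} (hb : b i = 1) {x : ℝ} (hx : x ∈ Ico (a i) (b i)) :
    oneFiber SI x ⊆ Icc (a i) (b i) := by
  rintro y ⟨hy, hxy⟩
  by_cases hy1 : y = 1
  · rw [hy1, ← hb]
    exact right_mem_Icc.2 (hfam.lower_lt_upper i).le
  · obtain ⟨j, hbj, -, hyj⟩ := hSI.mem_top_summand_of_eq_one hfam hS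
      (hfam.Icc_subset_s17 i (Ico_subset_Icc_self hx)) (hx.2.trans_eq hb).ne hy hy1 hxy
    rwa [hfam.upper_injective (hb.trans hbj.symm)]

theorem oneFiber_eq_image_of_mem_top (hSI : IsTconormOrdinalSum a b S SI) (hfam : GoodFamily a b)
    (hS : ∀ i, IsDisjunction (S i)) {i : I} (hb : b i = 1) {x : ℝ} (hx : x ∈ Ico (a i) (b i)) :
    oneFiber SI x =
      (fun z => (b i - a i) * z + a i) '' oneFiber (S i) ((x - a i) / (b i - a i)) := by
  have hlen : 0 < b i - a i := sub_pos.2 (hfam.lower_lt_upper i)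
  have hxi : x ∈ Icc (a i) (b i) := Ico_subset_Icc_self hx
  apply Subset.antisymm
  · intro y hy
    have hyi : y ∈ Icc (a i) (b i) := hSI.oneFiber_subset_of_mem_top hfam hS hb hx hy
    refine ⟨(y - a i) / (b i - a i),
      ⟨sub_div_sub_mem_Icc hyi, (hSI.eq_upper_iff hfam hxi hyi).1 (hy.2.trans hb.symm)⟩, ?_⟩
    simp only [mul_div_cancel₀ _ hlen.ne', sub_add_cancel]
  · rintro _ ⟨z, ⟨hz, hxz⟩, rfl⟩
    have hyi : (b i - a i) * z + a i ∈ Icc (a i) (b i) :=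
      ⟨le_add_of_nonneg_left (mul_nonneg hlen.le hz.1),
        le_sub_iff_add_le.1 (mul_le_of_le_one_right hlen.le hz.2)⟩
    refine ⟨hfam.Icc_subset_s17 i hyi, ((hSI.eq_upper_iff hfam hxi hyi).2 ?_).trans hb⟩
    rwa [add_sub_cancel_right, mul_div_cancel_left₀ _ hlen.ne']

theorem oneFiber_eq_singleton (hSI : IsTconormOrdinalSum a b S SI) (hfam : GoodFamily a b)
    (hS : ∀ i, IsDisjunction (S i)) {x : ℝ} (hx : x ∈ Icc (0 : ℝ) 1) (hx1 : x ≠ 1)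
    (hle : ∀ i, b i = 1 → x ≤ a i) : oneFiber SI x = {1} := by
  refine eq_singleton_iff_unique_mem.2
    ⟨one_mem_oneFiber (hSI.one_right hfam hS hx), fun y ⟨hy, hxy⟩ => ?_⟩
  by_contra hy1
  obtain ⟨i, hb, hxi, hyi⟩ := hSI.mem_top_summand_of_eq_one hfam hS hx hx1 hy hy1 hxy
  have hxa : x = a i := le_antisymm (hle i hb) hxi.1
  rw [hxa, hSI.lower_left hfam (hS i) hyi] at hxy
  exact hy1 hxy

theorem natNegS_one (hSI : IsTconormOrdinalSum a b S SI) (hfam : GoodFamily a b)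
    (hS : ∀ i, IsDisjunction (S i)) : natNegS SI 1 = 0 :=
  natNegS_eq_zero (hSI.one_left hfam hS (left_mem_Icc.2 zero_le_one))

theorem natNegS_of_mem_top (hSI : IsTconormOrdinalSum a b S SI) (hfam : GoodFamily a b)
    (hS : ∀ i, IsDisjunction (S i)) {i : I} (hb : b i = 1) {x : ℝ} (hx : x ∈ Ico (a i) (b i)) :
    natNegS SI x = (b i - a i) * natNegS (S i) ((x - a i) / (b i - a i)) + a i := by
  have hne : (oneFiber (S i) ((x - a i) / (b i - a i))).Nonempty :=
    ⟨1, one_mem_oneFiber ((hS i).one_right _ (sub_div_sub_mem_Icc (Ico_subset_Icc_self hx)))⟩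
  rw [natNegS_eq_sInf_oneFiber, hSI.oneFiber_eq_image_of_mem_top hfam hS hb hx,
    sInf_image_mul_add hne (bddBelow_oneFiber _ _) (sub_pos.2 (hfam.lower_lt_upper i)).le,
    ← natNegS_eq_sInf_oneFiber]

theorem natNegS_eq_one (hSI : IsTconormOrdinalSum a b S SI) (hfam : GoodFamily a b)
    (hS : ∀ i, IsDisjunction (S i)) {x : ℝ} (hx : x ∈ Icc (0 : ℝ) 1) (hx1 : x ≠ 1)
    (hle : ∀ i, b i = 1 → x ≤ a i) : natNegS SI x = 1 := by
  rw [natNegS_eq_sInf_oneFiber, hSI.oneFiber_eq_singleton hfam hS hx hx1 hle, csInf_singleton]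

end IsTconormOrdinalSum

end OrdinalSum

theorem natNeg_tconorm_ordinalSum_general {I : Type*} (a b : I → ℝ)
    (S : I → ℝ → ℝ → ℝ) (SI : ℝ → ℝ → ℝ)
    (hfam : GoodFamily a b) (hs : ∀ i, IsDisjunction (S i))
    (hSI : IsTconormOrdinalSum a b S SI) :
    natNegS SI 1 = 0 ∧
    (∀ i, b i = 1 → ∀ x ∈ Ico (a i) (b i),
      natNegS SI x = (1 - a i) * natNegS (S i) ((x - a i) / (1 - a i)) + a i) ∧
    (∀ i, b i < 1 → ∀ x ∈ Icc (a i) (b i), natNegS SI x = 1) ∧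
    (∀ x ∈ Icc (0 : ℝ) 1, x ≠ 1 → (∀ i, x ∉ Icc (a i) (b i)) → natNegS SI x = 1) := by
  refine ⟨hSI.natNegS_one hfam hs, fun i hb x hx => ?top, fun i hb x hx => ?lower_summand,
    fun x hx hx1 hgap => ?gap⟩
  case top =>
    simpa only [hb] using hSI.natNegS_of_mem_top hfam hs hb hx
  case lower_summand =>
    refine hSI.natNegS_eq_one hfam hs (hfam.Icc_subset_s17 i hx) (hx.2.trans_lt hb).ne fun j hbj => ?_
    have hij : b i < b j := hb.trans_eq hbj.symm
    exact hx.2.trans (hfam.upper_le_lower (ne_of_apply_ne b hij.ne) hij.le)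
  case gap =>
    refine hSI.natNegS_eq_one hfam hs hx hx1 fun j hbj => ?_
    exact (not_le.1 fun haj => hgap j ⟨haj, hx.2.trans_eq hbj.symm⟩).le

theorem natNeg_tconorm_ordinalSum {I : Type*} (a b : I → ℝ)
    (S : I → ℝ → ℝ → ℝ) (SI : ℝ → ℝ → ℝ)
    (hfam : GoodFamily a b) (hs : ∀ i, IsTconorm (S i))
    (hSI : IsTconormOrdinalSum a b S SI) :
    natNegS SI 1 = 0 ∧
    (∀ i, b i = 1 → ∀ x ∈ Ico (a i) (b i),
      natNegS SI x = (1 - a i) * natNegS (S i) ((x - a i) / (1 - a i)) + a i) ∧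
    (∀ i, b i < 1 → ∀ x ∈ Icc (a i) (b i), natNegS SI x = 1) ∧
    (∀ x ∈ Icc (0:ℝ) 1, x ≠ 1 → (∀ i, x ∉ Icc (a i) (b i)) → natNegS SI x = 1) :=
  natNeg_tconorm_ordinalSum_general a b S SI hfam (fun i => (hs i).isDisjunction) hSI
end
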